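/- If G is a forest (in particular any graph of infinite girth), then for every integer k with χ(G) ≤ k ≤ b(G), G admits a b-coloring with k colors. -/

import Mathlib

/-! A b-coloring with more than `k` colors provides more than `k` vertices of degree at least `k`.
Root the forest so that such a vertex `x` is a root, take the `k` shallowest such vertices as a set
`B`, and color `B` bijectively. To make each `u ∈ B` a b-vertex, its missing colors are given to
distinct children of `u` outside `B`. A missing color is forbidden at no more than one of these
children, the parent of the vertex of `B` with that color; so Hall's condition can only fail when
the parent of `u` lies outside `B`, and then the color of `x`, which has no parent, is forbidden
nowhere and saves the condition. The remaining vertices are colored greedily away from the roots: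
a vertex of degree at least `k` left out of `B` is so deep that no child of it is colored before
it. -/

open SimpleGraph

variable {V : Type*}

/-- A proper coloring of `G` using exactly the colors `0, …, k-1`. -/
def IsProperKColoring (G : SimpleGraph V) (k : ℕ) (c : V → ℕ) : Prop :=
  (∀ v, c v < k) ∧ (∀ u v, G.Adj u v → c u ≠ c v) ∧ ∀ i < k, ∃ v, c v = i

/-- `u` is a b-vertex: it has a neighbor in every color class other than its own. -/
def IsBVertex (G : SimpleGraph V) (k : ℕ) (c : V → ℕ) (u : V) : Prop :=
  ∀ j < k, j ≠ c u → ∃ w, G.Adj u w ∧ c w = j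

/-- A b-coloring of `G` with `k` colors: a proper coloring using exactly `k` colors
in which every color class contains a b-vertex. -/
def IsBColoring (G : SimpleGraph V) (k : ℕ) (c : V → ℕ) : Prop :=
  IsProperKColoring G k c ∧ ∀ i < k, ∃ u, c u = i ∧ IsBVertex G k c u

/-- The b-chromatic number: the largest `k` for which `G` has a b-coloring with `k` colors. -/
noncomputable def bChrom [Fintype V] (G : SimpleGraph V) : ℕ :=
  sSup {k | ∃ c : V → ℕ, IsBColoring G k c}

section Rooting

variable {G : SimpleGraph V} {r : V → ℕ}

/-- `u` is the parent of `v` for the depth function `r`: a neighbor of smaller depth. -/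
def IsParent (G : SimpleGraph V) (r : V → ℕ) (u v : V) : Prop :=
  G.Adj u v ∧ r u < r v

/-- `r` is a depth function on `G`, as given by the choice of a root in every component of a forest.
The roots are implicit: they are the vertices without parent. -/
structure IsRooting (G : SimpleGraph V) (r : V → ℕ) : Prop where
  ne_of_adj : ∀ {u v}, G.Adj u v → r u ≠ r v
  parent_unique : ∀ {u v w}, IsParent G r u v → IsParent G r w v → u = w

theorem IsRooting.isParent_of_adj_of_ne (hr : IsRooting G r) {u v w : V} (huv : IsParent G r u v)
    (hvw : G.Adj v w) (hwu : w ≠ u) : IsParent G r v w :=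
  ⟨hvw, (hr.ne_of_adj hvw).lt_or_gt.resolve_right
    fun hlt ↦ hwu (hr.parent_unique ⟨hvw.symm, hlt⟩ huv)⟩

theorem eq_penultimate_of_dist_lt (hG : G.IsAcyclic) {root u v : V} {p : G.Walk root v}
    (hp : p.IsPath) (hadj : G.Adj u v) (hlt : G.dist root u < G.dist root v) :
    u = p.penultimate := by
  refine hG.eq_penultimate_of_adj_end hp hadj.symm (by_contra fun hu ↦ ?_)
  obtain ⟨q, hq, hlen⟩ := (p.reachable.trans hadj.symm.reachable).exists_path_of_dist
  have hv : v ∈ q.support :=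
    hG.mem_support_of_ne_mem_support_of_adj_of_isPath hq hp hadj hu
  have hqp : q.length = p.length + 1 := by
    rw [hG.path_concat hp hq hadj.symm hv, Walk.length_concat]
  have := dist_le p
  omega

theorem isRooting_dist (hG : G.IsAcyclic) (root : G.ConnectedComponent → V)
    (hroot : ∀ C, G.connectedComponentMk (root C) = C) :
    IsRooting G fun v ↦ G.dist (root (G.connectedComponentMk v)) v := by
  have hreach (v : V) : G.Reachable (root (G.connectedComponentMk v)) v :=
    ConnectedComponent.exact (hroot _)
  have hcomp {u v : V} (h : G.Adj u v) : G.connectedComponentMk u = G.connectedComponentMk v :=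
    ConnectedComponent.sound h.reachable
  refine ⟨fun {u v} h ↦ ?_, fun {u v w} hu hw ↦ ?_⟩
  · rw [hcomp h]
    exact hG.dist_ne_of_adj h (hcomp h ▸ hreach u)
  · obtain ⟨p, hp, -⟩ := (hreach v).exists_path_of_dist
    have hpenultimate {u : V} (hadj : G.Adj u v)
        (hlt : G.dist (root (G.connectedComponentMk u)) u <
          G.dist (root (G.connectedComponentMk v)) v) : u = p.penultimate :=
      eq_penultimate_of_dist_lt hG hp hadj (hcomp hadj ▸ hlt)
    rw [hpenultimate hu.1 hu.2, hpenultimate hw.1 hw.2]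

theorem exists_isRooting_eq_zero (hG : G.IsAcyclic) (x : V) :
    ∃ r : V → ℕ, IsRooting G r ∧ r x = 0 := by
  classical
  let root : G.ConnectedComponent → V := Function.update (·.out) (G.connectedComponentMk x) x
  refine ⟨_, isRooting_dist hG root fun C ↦ ?_, ?_⟩
  · obtain rfl | hC := eq_or_ne C (G.connectedComponentMk x)
    · exact congrArg _ (Function.update_self ..)
    · exact (congrArg _ (Function.update_of_ne hC ..)).trans C.out_eq
  · have hx : root (G.connectedComponentMk x) = x := Function.update_self ..
    rw [hx, dist_self]

end Rooting

section Greedy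

/-- The vertices of `S` are properly colored by `c` with the colors `0, …, k-1`; the values of `c`
outside `S` are irrelevant. -/
structure IsProperOn (G : SimpleGraph V) (k : ℕ) (S : Set V) (c : V → ℕ) : Prop where
  lt : ∀ v ∈ S, c v < k
  ne_of_adj : ∀ u ∈ S, ∀ v ∈ S, G.Adj u v → c u ≠ c v

variable {G : SimpleGraph V} {r : V → ℕ} {S : Set V} {c : V → ℕ}

open scoped Classical in
/-- The greedy extension of the coloring `c` of `S`: in order of increasing `r`, every vertex
outside `S` receives the least color not yet present among its neighbors. -/
noncomputable def greedyColoring (G : SimpleGraph V) (r : V → ℕ) (S : Set V) (c : V → ℕ) (w : V) :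
    ℕ :=
  if w ∈ S then c w
  else sInf {i | ∀ v, G.Adj w v → (v ∈ S → c v ≠ i) ∧
    ∀ _ : r v < r w, greedyColoring G r S c v ≠ i}
termination_by r w

/-- The neighbors of `w` colored before `w` when a coloring of `S` is extended greedily along
`r`. -/
def earlierNeighbors (G : SimpleGraph V) (r : V → ℕ) (S : Set V) (w : V) : Set V :=
  {v | G.Adj w v ∧ (v ∈ S ∨ r v < r w)}

theorem greedyColoring_eqOn : Set.EqOn (greedyColoring G r S c) c S := fun w hw ↦ by
  rw [greedyColoring, if_pos hw]

theorem greedyColoring_of_notMem {w : V} (hw : w ∉ S) :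
    greedyColoring G r S c w = sInf (greedyColoring G r S c '' earlierNeighbors G r S w)ᶜ := by
  rw [greedyColoring, if_neg hw]
  congr 1
  ext i
  simp only [earlierNeighbors, Set.mem_compl_iff, Set.mem_image, not_exists]
  refine forall_congr' fun v ↦ ⟨?_, fun h hwv ↦ ⟨fun hv hi ↦ ?_, fun hlt hi ↦ ?_⟩⟩
  · rintro h ⟨⟨hwv, hv | hlt⟩, rfl⟩
    · exact (h hwv).1 hv (greedyColoring_eqOn hv).symm
    · exact (h hwv).2 hlt rfl
  · exact h ⟨⟨hwv, .inl hv⟩, (greedyColoring_eqOn hv).trans hi⟩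
  · exact h ⟨⟨hwv, .inr hlt⟩, hi⟩

theorem sInf_compl_notMem_and_lt {X : Set ℕ} {k : ℕ} (hX : X.encard < k) :
    sInf Xᶜ ∉ X ∧ sInf Xᶜ < k := by
  obtain ⟨i, hik, hiX⟩ : ∃ i ∈ Set.Iio k, i ∉ X := Set.not_subset.1 fun h ↦
    ((Set.Nat.encard_range k).symm.trans_le (Set.encard_le_encard h)).not_gt hX
  have hmem : sInf Xᶜ ∈ Xᶜ := Nat.sInf_mem ⟨i, hiX⟩
  exact ⟨hmem, (Nat.sInf_le hiX).trans_lt hik⟩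

theorem greedyColoring_isProperOn {k : ℕ} (hr : ∀ {u v}, G.Adj u v → r u ≠ r v)
    (hc : IsProperOn G k S c) (hlt : ∀ w ∉ S, (earlierNeighbors G r S w).encard < k) :
    IsProperOn G k Set.univ (greedyColoring G r S c) := by
  have hgreedy (w : V) (hw : w ∉ S) := greedyColoring_of_notMem (c := c) hw ▸
    sInf_compl_notMem_and_lt ((Set.encard_image_le (greedyColoring G r S c) _).trans_lt (hlt w hw))
  have hne {w v : V} (hw : w ∉ S) (hv : v ∈ earlierNeighbors G r S w) :
      greedyColoring G r S c w ≠ greedyColoring G r S c v := fun h ↦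
    (hgreedy w hw).1 (h ▸ Set.mem_image_of_mem _ hv)
  refine ⟨fun w _ ↦ ?_, fun u _ v _ huv ↦ ?_⟩
  · by_cases hw : w ∈ S
    · exact greedyColoring_eqOn hw ▸ hc.lt w hw
    · exact (hgreedy w hw).2
  · by_cases hu : u ∈ S <;> by_cases hv : v ∈ S
    · rw [greedyColoring_eqOn hu, greedyColoring_eqOn hv]
      exact hc.ne_of_adj u hu v hv huv
    · exact (hne hv ⟨huv.symm, .inl hu⟩).symm
    · exact hne hu ⟨huv, .inl hv⟩
    · obtain hlt | hlt := (hr huv).lt_or_gt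
      · exact (hne hv ⟨huv.symm, .inr hlt⟩).symm
      · exact hne hu ⟨huv, .inr hlt⟩

end Greedy

section Representatives

theorem exists_injective_mem_of_card_le {ι α : Type*} [Finite ι] {t : ι → Set α}
    (ht : ∀ i, ENat.card ι ≤ (t i).encard + 1)
    (ht' : Nonempty ι → ∃ i, ENat.card ι ≤ (t i).encard) :
    ∃ g : ι → α, Function.Injective g ∧ ∀ i, g i ∈ t i := by
  classical
  have := Fintype.ofFinite ι
  simp only [ENat.card_eq_coe_fintype_card] at ht ht'
  choose T hT hcard using fun i ↦
    Set.exists_subset_encard_eq (min_le_right (Fintype.card ι : ℕ∞) (t i).encard)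
  have hfin (i : ι) : (T i).Finite :=
    Set.finite_of_encard_le_coe ((hcard i).trans_le (min_le_left _ _))
  simp only [(hfin _).encard_eq_coe_toFinset_card] at hcard
  have hall (s : Finset ι) : s.card ≤ (s.biUnion fun i ↦ (hfin i).toFinset).card := by
    obtain rfl | ⟨i, hi⟩ := s.eq_empty_or_nonempty
    · simp
    obtain hs | hs := s.card_le_univ.lt_or_eq
    · refine le_trans ?_ (Finset.card_le_card (Finset.subset_biUnion_of_mem _ hi))
      have : (Fintype.card ι : ℕ∞) ≤ (hfin i).toFinset.card + 1 := by
        rw [hcard, min_add]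
        exact le_min le_self_add (ht i)
      norm_cast at this
      omega
    · obtain ⟨j, hj⟩ := ht' ⟨i⟩
      have hjs : j ∈ s := (Finset.card_eq_iff_eq_univ s).1 hs ▸ Finset.mem_univ j
      refine le_trans ?_ (Finset.card_le_card (Finset.subset_biUnion_of_mem _ hjs))
      have : ((hfin j).toFinset.card : ℕ∞) = Fintype.card ι := (hcard j).trans (min_eq_left hj)
      norm_cast at this
      omega
  obtain ⟨g, hinj, hg⟩ := (Finset.all_card_le_biUnion_card_iff_exists_injective _).1 hall
  exact ⟨g, hinj, fun i ↦ hT i ((hfin i).mem_toFinset.1 (hg i))⟩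

/-- The colors in `0, …, k-1` that `u` does not see, on itself or on a neighbor, when only the
vertices of `B` are colored. -/
def missingColors (G : SimpleGraph V) (k : ℕ) (B : Set V) (f : V → ℕ) (u : V) : Set ℕ :=
  Set.Iio k \ f '' (B ∩ insert u (G.neighborSet u))

/-- The children of `u` outside `B` that can receive the color `i` without conflict with the
coloring `f` of `B`. -/
def freeChildren (G : SimpleGraph V) (r : V → ℕ) (B : Set V) (f : V → ℕ) (u : V) (i : ℕ) : Set V :=
  {p | IsParent G r u p ∧ p ∉ B ∧ ∀ b ∈ B, G.Adj p b → f b ≠ i}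

/-- The children of `u` that cannot receive the color `i` because of a neighbor in `B`. -/
def blockedChildren (G : SimpleGraph V) (r : V → ℕ) (B : Set V) (f : V → ℕ) (u : V) (i : ℕ) :
    Set V :=
  {p | IsParent G r u p ∧ ∃ b ∈ B, G.Adj p b ∧ f b = i}

variable {G : SimpleGraph V} {r f : V → ℕ} {k i : ℕ} {B : Set V} {u x : V}

theorem ne_of_mem_missingColors (hu : u ∈ B) (hi : i ∈ missingColors G k B f u) : i ≠ f u :=
  fun h ↦ hi.2 ⟨u, ⟨hu, Set.mem_insert u _⟩, h.symm⟩

theorem encard_missingColors_add (hf : Set.BijOn f B (Set.Iio k)) (hu : u ∈ B) :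
    (missingColors G k B f u).encard + ((B ∩ G.neighborSet u).encard + 1) = k := by
  have hseen : (f '' (B ∩ insert u (G.neighborSet u))).encard =
      (B ∩ G.neighborSet u).encard + 1 := by
    rw [(hf.injOn.mono Set.inter_subset_left).encard_image, Set.inter_insert_of_mem hu,
      Set.encard_insert_of_notMem fun h ↦ G.irrefl h.2]
  rw [← hseen, missingColors, Set.encard_sdiff_add_encard_of_subset
    ((Set.image_mono Set.inter_subset_left).trans hf.mapsTo.image_subset)]
  exact Set.Nat.encard_range k

theorem IsRooting.exists_isParent_of_mem_blockedChildren (hr : IsRooting G r) (hi : i ≠ f u) {p : V}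
    (hp : p ∈ blockedChildren G r B f u i) : ∃ b ∈ B, IsParent G r p b ∧ f b = i := by
  obtain ⟨hup, b, hb, hpb, rfl⟩ := hp
  exact ⟨b, hb, hr.isParent_of_adj_of_ne hup hpb fun h ↦ hi (congrArg f h), rfl⟩

theorem IsRooting.subsingleton_blockedChildren (hr : IsRooting G r) (hf : Set.InjOn f B)
    (hi : i ≠ f u) : (blockedChildren G r B f u i).Subsingleton := by
  intro p hp q hq
  obtain ⟨b, hb, hpb, rfl⟩ := hr.exists_isParent_of_mem_blockedChildren hi hp
  obtain ⟨b', hb', hqb', hbb'⟩ := hr.exists_isParent_of_mem_blockedChildren hi hq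
  exact hr.parent_unique hpb (hf hb' hb hbb' ▸ hqb')

theorem IsRooting.blockedChildren_eq_empty (hr : IsRooting G r) (hf : Set.InjOn f B) (hx : x ∈ B)
    (hroot : ∀ v, ¬ IsParent G r v x) (hxu : f x ≠ f u) :
    blockedChildren G r B f u (f x) = ∅ := by
  refine Set.eq_empty_of_forall_notMem fun p hp ↦ ?_
  obtain ⟨b, hb, hpb, hbx⟩ := hr.exists_isParent_of_mem_blockedChildren hxu hp
  exact hroot p (hf hb hx hbx ▸ hpb)

theorem IsRooting.neighborSet_subset (hr : IsRooting G r) (i : ℕ) :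
    G.neighborSet u ⊆ freeChildren G r B f u i ∪ (B ∩ G.neighborSet u) ∪
      (blockedChildren G r B f u i ∪ {q | IsParent G r q u ∧ q ∉ B}) := by
  intro v huv
  by_cases hvB : v ∈ B
  · exact .inl (.inr ⟨hvB, huv⟩)
  obtain hlt | hlt := (hr.ne_of_adj huv).lt_or_gt
  · by_cases hfree : ∀ b ∈ B, G.Adj v b → f b ≠ i
    · exact .inl (.inl ⟨⟨huv, hlt⟩, hvB, hfree⟩)
    · push Not at hfree
      exact .inr (.inl ⟨⟨huv, hlt⟩, hfree⟩)
  · exact .inr (.inr ⟨⟨huv.symm, hlt⟩, hvB⟩)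

theorem IsRooting.encard_missingColors_add_one_le (hr : IsRooting G r)
    (hf : Set.BijOn f B (Set.Iio k)) (hu : u ∈ B) (hdeg : k ≤ (G.neighborSet u).encard) (i : ℕ) :
    (missingColors G k B f u).encard + 1 ≤ (freeChildren G r B f u i).encard +
      ((blockedChildren G r B f u i).encard + {q | IsParent G r q u ∧ q ∉ B}.encard) := by
  have hfin : (B ∩ G.neighborSet u).encard ≠ ⊤ :=
    ((hf.finite_iff_finite.2 (Set.finite_Iio k)).inter_of_left _).encard_lt_top.ne
  rw [← ENat.add_le_add_iff_right hfin, add_assoc, add_comm 1, encard_missingColors_add hf hu,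
    add_right_comm]
  calc (k : ℕ∞) ≤ (G.neighborSet u).encard := hdeg
    _ ≤ _ := Set.encard_le_encard (hr.neighborSet_subset i)
    _ ≤ _ := (Set.encard_union_le _ _).trans
      (add_le_add (Set.encard_union_le _ _) (Set.encard_union_le _ _))

theorem IsRooting.encard_missingColors_le_add_one (hr : IsRooting G r)
    (hf : Set.BijOn f B (Set.Iio k)) (hu : u ∈ B) (hdeg : k ≤ (G.neighborSet u).encard)
    (hi : i ≠ f u) :
    (missingColors G k B f u).encard ≤ (freeChildren G r B f u i).encard + 1 := by
  have hblocked := Set.encard_le_one_iff_subsingleton.2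
    (hr.subsingleton_blockedChildren hf.injOn hi)
  have hparent : {q | IsParent G r q u ∧ q ∉ B}.encard ≤ 1 :=
    Set.encard_le_one_iff_subsingleton.2 fun _ hq _ hq' ↦ hr.parent_unique hq.1 hq'.1
  rw [← ENat.add_le_add_iff_right ENat.one_ne_top, add_assoc]
  grw [hr.encard_missingColors_add_one_le hf hu hdeg i, hblocked, hparent]

theorem IsRooting.exists_encard_missingColors_le (hr : IsRooting G r)
    (hf : Set.BijOn f B (Set.Iio k)) (hx : x ∈ B) (hroot : ∀ v, ¬ IsParent G r v x) (hu : u ∈ B)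
    (hdeg : k ≤ (G.neighborSet u).encard) (hne : (missingColors G k B f u).Nonempty) :
    ∃ i ∈ missingColors G k B f u,
      (missingColors G k B f u).encard ≤ (freeChildren G r B f u i).encard := by
  suffices ∃ i ∈ missingColors G k B f u, (blockedChildren G r B f u i).encard +
      {q | IsParent G r q u ∧ q ∉ B}.encard ≤ 1 by
    obtain ⟨i, hi, hle⟩ := this
    refine ⟨i, hi, (ENat.add_le_add_iff_right ENat.one_ne_top).1 ?_⟩
    grw [hr.encard_missingColors_add_one_le hf hu hdeg i, hle]
  obtain hparent | ⟨q, hqu, hqB⟩ := {q | IsParent G r q u ∧ q ∉ B}.eq_empty_or_nonempty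
  · obtain ⟨i, hi⟩ := hne
    refine ⟨i, hi, ?_⟩
    rw [hparent, Set.encard_empty, add_zero, Set.encard_le_one_iff_subsingleton]
    exact hr.subsingleton_blockedChildren hf.injOn (ne_of_mem_missingColors hu hi)
  · have hx_missing : f x ∈ missingColors G k B f u := by
      refine ⟨hf.mapsTo hx, ?_⟩
      rintro ⟨b, ⟨hb, hub⟩, hbx⟩
      obtain rfl := hf.injOn hb hx hbx
      obtain rfl | hub := hub
      · exact hroot q hqu
      · exact hroot u (hr.isParent_of_adj_of_ne hqu hub fun h ↦ hqB (h ▸ hb))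
    refine ⟨f x, hx_missing, ?_⟩
    rw [hr.blockedChildren_eq_empty hf.injOn hx hroot (ne_of_mem_missingColors hu hx_missing),
      Set.encard_empty, zero_add, Set.encard_le_one_iff_subsingleton]
    exact fun _ hq _ hq' ↦ hr.parent_unique hq.1 hq'.1

theorem IsRooting.exists_representatives (hr : IsRooting G r) (hf : Set.BijOn f B (Set.Iio k))
    (hx : x ∈ B) (hroot : ∀ v, ¬ IsParent G r v x) (hu : u ∈ B)
    (hdeg : k ≤ (G.neighborSet u).encard) :
    ∃ g : ℕ → V, Set.InjOn g (missingColors G k B f u) ∧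
      ∀ i ∈ missingColors G k B f u, g i ∈ freeChildren G r B f u i := by
  have : Finite (missingColors G k B f u) := ((Set.finite_Iio k).subset Set.sdiff_subset).to_subtype
  obtain ⟨g, hinj, hg⟩ := exists_injective_mem_of_card_le
    (t := fun i : missingColors G k B f u ↦ freeChildren G r B f u i)
    (fun i ↦ hr.encard_missingColors_le_add_one hf hu hdeg (ne_of_mem_missingColors hu i.2))
    fun ⟨i⟩ ↦ by
      obtain ⟨j, hj, hle⟩ := hr.exists_encard_missingColors_le hf hx hroot hu hdeg ⟨i, i.2⟩
      exact ⟨⟨j, hj⟩, hle⟩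
  have hext (i : missingColors G k B f u) :
      Function.extend Subtype.val g (fun _ ↦ u) i = g i := Subtype.val_injective.extend_apply _ _ i
  refine ⟨Function.extend Subtype.val g fun _ ↦ u, fun i hi j hj hij ↦ ?_, fun i hi ↦ ?_⟩
  · rw [hext ⟨i, hi⟩, hext ⟨j, hj⟩] at hij
    exact congrArg Subtype.val (hinj hij)
  · exact hext ⟨i, hi⟩ ▸ hg ⟨i, hi⟩

end Representatives

section Seed

/-- A partial b-coloring with `k` colors: `c` colors `S`, and `B ⊆ S` is a system of b-vertices, one
of each color. The vertices of `S` outside `B` are children of vertices of `B`. -/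
structure IsSeed (G : SimpleGraph V) (r : V → ℕ) (k : ℕ) (B S : Set V) (c : V → ℕ) : Prop where
  subset : B ⊆ S
  isProperOn : IsProperOn G k S c
  surjOn : Set.SurjOn c B (Set.Iio k)
  exists_adj : ∀ u ∈ B, ∀ j < k, j ≠ c u → ∃ w ∈ S, G.Adj u w ∧ c w = j
  exists_isParent : ∀ v ∈ S, v ∉ B → ∃ u ∈ B, IsParent G r u v

variable {G : SimpleGraph V} {r f c c' : V → ℕ} {k : ℕ} {B S : Set V} {x : V}

theorem IsSeed.isBColoring_of_eqOn (hS : IsSeed G r k B S c) (hcc' : Set.EqOn c' c S)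
    (hc' : IsProperOn G k Set.univ c') : IsBColoring G k c' := by
  refine ⟨⟨fun v ↦ hc'.lt v trivial, fun u v ↦ hc'.ne_of_adj u trivial v trivial, fun i hi ↦ ?_⟩,
    fun i hi ↦ ?_⟩ <;> obtain ⟨u, hu, rfl⟩ := hS.surjOn hi
  · exact ⟨u, hcc' (hS.subset hu)⟩
  · refine ⟨u, hcc' (hS.subset hu), fun j hj hju ↦ ?_⟩
    obtain ⟨w, hw, huw, rfl⟩ := hS.exists_adj u hu j hj (hcc' (hS.subset hu) ▸ hju)
    exact ⟨w, huw, hcc' hw⟩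

theorem IsRooting.encard_earlierNeighbors_lt (hr : IsRooting G r) (hS : IsSeed G r k B S c)
    (hk : 2 ≤ k)
    (hB : ∀ v, k ≤ (G.neighborSet v).encard → ∀ u ∈ B, r v < r u → v ∈ B) {w : V} (hw : w ∉ S) :
    (earlierNeighbors G r S w).encard < k := by
  have hwB : w ∉ B := fun h ↦ hw (hS.subset h)
  obtain hlt | hdeg := lt_or_ge (G.neighborSet w).encard (k : ℕ∞)
  · exact (Set.encard_le_encard fun v hv ↦ hv.1).trans_lt hlt
  have hparent {v : V} (hv : v ∈ earlierNeighbors G r S w) : IsParent G r v w := by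
    refine ⟨hv.1.symm, hv.2.elim (fun hvS ↦ ?_) id⟩
    refine (hr.ne_of_adj hv.1).lt_or_gt.resolve_left fun hlt ↦ hwB ?_
    by_cases hvB : v ∈ B
    · exact hB w hdeg v hvB hlt
    · obtain ⟨u, hu, huv⟩ := hS.exists_isParent v hvS hvB
      exact hr.parent_unique ⟨hv.1, hlt⟩ huv ▸ hu
  calc (earlierNeighbors G r S w).encard ≤ 1 := Set.encard_le_one_iff_subsingleton.2
        fun _ hv _ hv' ↦ hr.parent_unique (hparent hv) (hparent hv')
    _ < k := by exact_mod_cast hk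

/-- The pairs of a vertex of `B` and a color which that vertex still misses. -/
def missingPairs (G : SimpleGraph V) (k : ℕ) (B : Set V) (f : V → ℕ) : Set (V × ℕ) :=
  {a | a.1 ∈ B ∧ a.2 ∈ missingColors G k B f a.1}

theorem IsRooting.exists_injOn_missingPairs (hr : IsRooting G r) (hf : Set.BijOn f B (Set.Iio k))
    (hx : x ∈ B) (hroot : ∀ v, ¬ IsParent G r v x)
    (hdeg : ∀ u ∈ B, k ≤ (G.neighborSet u).encard) :
    ∃ rep : V × ℕ → V, Set.InjOn rep (missingPairs G k B f) ∧
      ∀ a ∈ missingPairs G k B f, rep a ∈ freeChildren G r B f a.1 a.2 := by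
  have : Nonempty V := ⟨x⟩
  choose! g hinj hg using fun u hu ↦ hr.exists_representatives hf hx hroot hu (hdeg u hu)
  refine ⟨fun a ↦ g a.1 a.2, ?_, fun a ha ↦ hg a.1 ha.1 a.2 ha.2⟩
  rintro ⟨u, i⟩ ⟨hu, hi⟩ ⟨v, j⟩ ⟨hv, hj⟩ (hij : g u i = g v j)
  obtain rfl : u = v := hr.parent_unique (hg u hu i hi).1 (hij ▸ (hg v hv j hj).1)
  exact congrArg (Prod.mk u) (hinj u hu hi hj hij)

theorem exists_eqOn_and_comp_eqOn {α β ι : Type*} [Nonempty ι] {B : Set α} {I : Set ι} {g : ι → α}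
    (hg : Set.InjOn g I) (hgB : ∀ a ∈ I, g a ∉ B) (f : α → β) (h : ι → β) :
    ∃ c : α → β, Set.EqOn c f B ∧ Set.EqOn (c ∘ g) h I := by
  classical
  refine ⟨B.piecewise f (h ∘ Function.invFunOn g I), B.piecewise_eqOn _ _, fun a ha ↦ ?_⟩
  exact (B.piecewise_eq_of_notMem _ _ (hgB a ha)).trans (congrArg h (hg.leftInvOn_invFunOn ha))

theorem IsRooting.isProperOn_union_image (hr : IsRooting G r) (hf : Set.BijOn f B (Set.Iio k))
    {rep : V × ℕ → V}
    (hrep : ∀ a ∈ missingPairs G k B f, rep a ∈ freeChildren G r B f a.1 a.2)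
    (hcB : Set.EqOn c f B) (hc : Set.EqOn (c ∘ rep) Prod.snd (missingPairs G k B f)) :
    IsProperOn G k (B ∪ rep '' missingPairs G k B f) c := by
  have hc_rep {a : V × ℕ} (ha : a ∈ missingPairs G k B f) : c (rep a) = a.2 := hc ha
  have hne {a : V × ℕ} (ha : a ∈ missingPairs G k B f) {b : V} (hb : b ∈ B)
      (hab : G.Adj (rep a) b) : c (rep a) ≠ c b := by
    rw [hc_rep ha, hcB hb]
    exact ((hrep a ha).2.2 b hb hab).symm
  constructor
  · rintro _ (hv | ⟨a, ha, rfl⟩)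
    · exact hcB hv ▸ hf.mapsTo hv
    · exact hc_rep ha ▸ ha.2.1
  · rintro u (hu | ⟨a, ha, rfl⟩) v (hv | ⟨b, hb, rfl⟩) huv
    · rw [hcB hu, hcB hv]
      exact fun h ↦ huv.ne (hf.injOn hu hv h)
    · exact (hne hb hu huv.symm).symm
    · exact hne ha hv huv
    · have hpa := (hrep a ha).1
      have hpb := (hrep b hb).1
      have hab : IsParent G r (rep a) (rep b) :=
        hr.isParent_of_adj_of_ne hpa huv fun h ↦ (hrep b hb).2.1 (h ▸ ha.1)
      exact absurd (hr.parent_unique hab hpb ▸ hb.1) (hrep a ha).2.1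

theorem IsRooting.exists_isSeed (hr : IsRooting G r) (hf : Set.BijOn f B (Set.Iio k)) (hx : x ∈ B)
    (hroot : ∀ v, ¬ IsParent G r v x) (hdeg : ∀ u ∈ B, k ≤ (G.neighborSet u).encard) :
    ∃ S c, IsSeed G r k B S c := by
  obtain ⟨rep, hinj, hrep⟩ := hr.exists_injOn_missingPairs hf hx hroot hdeg
  have : Nonempty V := ⟨x⟩
  obtain ⟨c, hcB, hc⟩ :=
    exists_eqOn_and_comp_eqOn hinj (fun a ha ↦ (hrep a ha).2.1) f Prod.snd
  refine ⟨B ∪ rep '' missingPairs G k B f, c, Set.subset_union_left,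
    hr.isProperOn_union_image hf hrep hcB hc, hf.surjOn.congr hcB.symm, fun u hu j hj hju ↦ ?_, ?_⟩
  · by_cases hseen : j ∈ f '' (B ∩ insert u (G.neighborSet u))
    · obtain ⟨b, ⟨hb, rfl | hub⟩, rfl⟩ := hseen
      · exact absurd (hcB hb).symm hju
      · exact ⟨b, .inl hb, hub, hcB hb⟩
    · have hmem : (u, j) ∈ missingPairs G k B f := ⟨hu, hj, hseen⟩
      exact ⟨_, .inr (Set.mem_image_of_mem rep hmem), (hrep _ hmem).1.1, hc hmem⟩
  · rintro _ (hv | ⟨a, ha, rfl⟩) hvB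
    · exact absurd hv hvB
    · exact ⟨a.1, ha.1, (hrep a ha).1⟩

end Seed

section HighDegree

/-- The vertices of `G` of degree at least `k`, infinite degree included. -/
def highDegreeVertices (G : SimpleGraph V) (k : ℕ) : Set V :=
  {u | k ≤ (G.neighborSet u).encard}

variable {G : SimpleGraph V} {c : V → ℕ} {k K : ℕ}

theorem exists_subset_encard_eq_forall_lt_mem {α β : Type*} [LinearOrder β] [WellFoundedLT β]
    {D : Set α} (r : α → β) (hk : k ≤ D.encard) :
    ∃ B ⊆ D, B.encard = k ∧ ∀ v ∈ D, ∀ u ∈ B, r v < r u → v ∈ B := by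
  induction k with
  | zero => exact ⟨∅, D.empty_subset, by simp⟩
  | succ k ih =>
    obtain ⟨B, hBD, hcard, hlow⟩ := ih ((by simp : (k : ℕ∞) ≤ (k + 1 : ℕ)).trans hk)
    have hne : (D \ B).Nonempty := by
      rw [Set.nonempty_iff_ne_empty, Ne, Set.sdiff_eq_empty]
      intro hDB
      have := hk.trans ((Set.encard_le_encard hDB).trans_eq hcard)
      norm_cast at this
      omega
    obtain ⟨y, ⟨hyD, hyB⟩, hmin⟩ := exists_minimalFor_of_wellFoundedLT (· ∈ D \ B) r hne
    refine ⟨insert y B, Set.insert_subset hyD hBD, ?_, fun v hv u hu hlt ↦ ?_⟩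
    · rw [Set.encard_insert_of_notMem hyB, hcard, Nat.cast_succ]
    · by_contra hvB
      rw [Set.mem_insert_iff, not_or] at hvB
      obtain rfl | hu := hu
      · exact hlt.not_ge (hmin ⟨hv, hvB.2⟩ hlt.le)
      · exact hvB.2 (hlow v hv u hu hlt)

theorem exists_bijOn_Iio_nat {α : Type*} {B : Set α} (hB : B.encard = k) :
    ∃ f : α → ℕ, Set.BijOn f B (Set.Iio k) :=
  (Set.finite_of_encard_eq_coe hB).exists_bijOn_of_encard_eq
    (hB.trans (Set.Nat.encard_range k).symm)

theorem exists_isBColoring_of_le_encard_highDegreeVertices (hG : G.IsAcyclic) (hk : 2 ≤ k)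
    (hcard : k ≤ (highDegreeVertices G k).encard) : ∃ c, IsBColoring G k c := by
  have hpos : (0 : ℕ∞) < k := by exact_mod_cast (by omega : 0 < k)
  obtain ⟨y, hy⟩ : (highDegreeVertices G k).Nonempty := Set.encard_pos.1 (hpos.trans_le hcard)
  obtain ⟨r, hr, hy0⟩ := exists_isRooting_eq_zero hG y
  obtain ⟨B, hBD, hB, hlow⟩ := exists_subset_encard_eq_forall_lt_mem r hcard
  obtain ⟨x, hxB, hx0⟩ : ∃ x ∈ B, r x = 0 := by
    obtain ⟨u, hu⟩ : B.Nonempty := Set.encard_pos.1 (hB ▸ hpos)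
    obtain hu0 | hu0 := (r u).eq_zero_or_pos
    · exact ⟨u, hu, hu0⟩
    · exact ⟨y, hlow y hy u hu (hy0 ▸ hu0), hy0⟩
  have hroot (v : V) : ¬ IsParent G r v x := fun h ↦ (hx0 ▸ h.2).not_ge (r v).zero_le
  obtain ⟨f, hf⟩ := exists_bijOn_Iio_nat hB
  obtain ⟨S, c, hS⟩ := hr.exists_isSeed hf hxB hroot hBD
  exact ⟨greedyColoring G r S c, hS.isBColoring_of_eqOn greedyColoring_eqOn
    (greedyColoring_isProperOn hr.ne_of_adj hS.isProperOn
      fun w ↦ hr.encard_earlierNeighbors_lt hS hk hlow)⟩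

theorem IsBVertex.le_encard_neighborSet_add_one {u : V} (hu : IsBVertex G k c u) :
    k ≤ (G.neighborSet u).encard + 1 := by
  have hsub : Set.Iio k ⊆ insert (c u) (c '' G.neighborSet u) := fun j hj ↦
    or_iff_not_imp_left.2 (hu j hj)
  calc (k : ℕ∞) = (Set.Iio k).encard := (Set.Nat.encard_range k).symm
    _ ≤ (c '' G.neighborSet u).encard + 1 :=
      (Set.encard_le_encard hsub).trans (Set.encard_insert_le _ _)
    _ ≤ (G.neighborSet u).encard + 1 := by grw [Set.encard_image_le]

theorem IsBColoring.le_encard_highDegreeVertices (hc : IsBColoring G K c) (hkK : k < K) :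
    K ≤ (highDegreeVertices G k).encard := by
  have hsub : Set.Iio K ⊆ c '' highDegreeVertices G k := by
    intro i hi
    obtain ⟨u, rfl, hu⟩ := hc.2 i hi
    refine ⟨u, (ENat.add_le_add_iff_right ENat.one_ne_top).1 ?_, rfl⟩
    exact le_trans (by exact_mod_cast hkK) hu.le_encard_neighborSet_add_one
  calc (K : ℕ∞) = (Set.Iio K).encard := (Set.Nat.encard_range K).symm
    _ ≤ (highDegreeVertices G k).encard :=
      (Set.encard_le_encard hsub).trans (Set.encard_image_le _ _)

theorem IsBColoring.exists_adj (hc : IsBColoring G K c) (hK : 2 ≤ K) : ∃ u v, G.Adj u v := by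
  obtain ⟨u, hu, hb⟩ := hc.2 0 (by omega)
  obtain ⟨v, huv, -⟩ := hb 1 hK (by omega)
  exact ⟨u, v, huv⟩

theorem isBColoring_zero [IsEmpty V] (G : SimpleGraph V) (c : V → ℕ) : IsBColoring G 0 c :=
  ⟨⟨isEmptyElim, isEmptyElim, by simp⟩, by simp⟩

theorem IsProperKColoring.le_card [Fintype V] (hc : IsProperKColoring G k c) :
    k ≤ Fintype.card V := by
  have hsub : Finset.range k ⊆ Finset.univ.image c := fun i hi ↦ by
    simpa using hc.2.2 i (Finset.mem_range.1 hi)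
  simpa using (Finset.card_le_card hsub).trans Finset.card_image_le

theorem exists_isBColoring_of_le_bChrom [Fintype V] (hG : G.Colorable k) (hk : k ≤ bChrom G) :
    ∃ K ≥ k, ∃ c, IsBColoring G K c := by
  obtain rfl | hpos := k.eq_zero_or_pos
  · have := colorable_zero_iff.1 hG
    exact ⟨0, le_rfl, 0, isBColoring_zero G 0⟩
  · have hne : {K | ∃ c, IsBColoring G K c}.Nonempty := by
      refine Set.nonempty_iff_ne_empty.2 fun h ↦ (hpos.trans_le hk).ne' ?_
      rw [bChrom, h, csSup_empty, Nat.bot_eq_zero]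
    exact ⟨bChrom G, hk, Nat.sSup_mem hne ⟨Fintype.card V, fun K ⟨c, hc⟩ ↦ hc.1.le_card⟩⟩

end HighDegree

theorem bContinuous_of_isAcyclic_general (G : SimpleGraph V) (hG : G.IsAcyclic) (k : ℕ)
    (h1 : G.chromaticNumber ≤ (k : ℕ∞)) (h2 : ∃ K ≥ k, ∃ c : V → ℕ, IsBColoring G K c) :
    ∃ c : V → ℕ, IsBColoring G k c := by
  obtain ⟨C⟩ := chromaticNumber_le_iff_colorable.1 h1
  obtain ⟨K, hkK, c, hc⟩ := h2
  obtain rfl | hlt := hkK.eq_or_lt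
  · exact ⟨c, hc⟩
  have hk : k = 0 ∨ 2 ≤ k := by
    by_contra! hk
    obtain rfl : k = 1 := by omega
    obtain ⟨u, v, huv⟩ := hc.exists_adj hlt
    exact C.valid huv (Subsingleton.elim _ _)
  obtain rfl | hk := hk
  · have : IsEmpty V := C.toFun.isEmpty
    exact ⟨c, isBColoring_zero G c⟩
  · refine exists_isBColoring_of_le_encard_highDegreeVertices hG hk ?_
    exact le_trans (by exact_mod_cast hkK) (hc.le_encard_highDegreeVertices hlt)

/-- Forests are b-continuous. -/
theorem bContinuous_of_isAcyclic [Fintype V] (G : SimpleGraph V) (hG : G.IsAcyclic) (k : ℕ)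
    (h1 : G.chromaticNumber ≤ (k : ℕ∞)) (h2 : k ≤ bChrom G) :
    ∃ c : V → ℕ, IsBColoring G k c :=
  bContinuous_of_isAcyclic_general G hG k h1
    (exists_isBColoring_of_le_bChrom (chromaticNumber_le_iff_colorable.1 h1) h2)
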